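/- Let Ω ⊂ ℂ be a bounded domain with (closure Ω)° = Ω, with ℂ \ closure(Ω) connected, and such that there exists M < ∞ with any two points of Ω joined by a path in Ω of length at most M. Then for every f continuous on closure(Ω) with all derivatives f⁽ᵏ⁾ extending continuously to closure(Ω), every ε > 0, and every n ∈ ℕ, there is a polynomial P with |P⁽ᵏ⁾ − f⁽ᵏ⁾| < ε on closure(Ω) for all 0 ≤ k ≤ n. -/

import Mathlib

/-- Two points are joined in `Ω` by a path of length at most `M`. -/
def JoinedLe (Ω : Set ℂ) (M : ℝ) (z w : ℂ) : Prop :=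
  ∃ γ : ℝ → ℂ, ContinuousOn γ (Set.Icc 0 1) ∧ γ 0 = z ∧ γ 1 = w ∧
    (∀ t ∈ Set.Icc (0:ℝ) 1, γ t ∈ Ω) ∧ eVariationOn γ (Set.Icc 0 1) ≤ ENNReal.ofReal M

/-- `g` agrees on `K` with a uniform limit of polynomials. -/
def PK (K : Set ℂ) [CompactSpace K] (g : ℂ → ℂ) : Prop :=
  ∃ h ∈ (polynomialFunctions K).topologicalClosure, ∀ z : K, h z = g z

theorem PK.add {K : Set ℂ} [CompactSpace K] {g h : ℂ → ℂ} (hg : PK K g) (hh : PK K h) :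
    PK K (fun z => g z + h z) := by
  obtain ⟨a, ha, ha'⟩ := hg
  obtain ⟨b, hb, hb'⟩ := hh
  exact ⟨a + b, add_mem ha hb, fun z => by simp [ha', hb']⟩

theorem PK.mul {K : Set ℂ} [CompactSpace K] {g h : ℂ → ℂ} (hg : PK K g) (hh : PK K h) :
    PK K (fun z => g z * h z) := by
  obtain ⟨a, ha, ha'⟩ := hg
  obtain ⟨b, hb, hb'⟩ := hh
  exact ⟨a * b, mul_mem ha hb, fun z => by simp [ha', hb']⟩

theorem PK.const (K : Set ℂ) [CompactSpace K] (c : ℂ) : PK K (fun _ => c) :=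
  ⟨algebraMap ℂ _ c, Subalgebra.algebraMap_mem _ _, fun z => by simp⟩

theorem PK.poly (K : Set ℂ) [CompactSpace K] (P : Polynomial ℂ) : PK K (fun z => P.eval z) := by
  refine ⟨P.toContinuousMapOn K, Subalgebra.le_topologicalClosure _ ?_, fun z => by simp⟩
  rw [← SetLike.mem_coe, polynomialFunctions_coe]
  exact ⟨P, rfl⟩

theorem PK.id (K : Set ℂ) [CompactSpace K] : PK K (fun z => z) := by
  simpa using PK.poly K Polynomial.X

theorem PK.congr {K : Set ℂ} [CompactSpace K] {g h : ℂ → ℂ} (hg : PK K g) (e : ∀ z ∈ K, g z = h z) : PK K h := by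
  obtain ⟨a, ha, ha'⟩ := hg
  exact ⟨a, ha, fun z => by rw [ha', e z z.2]⟩

theorem PK.neg {K : Set ℂ} [CompactSpace K] {g : ℂ → ℂ} (hg : PK K g) :
    PK K (fun z => - g z) := ((PK.const K (-1)).mul hg).congr (by simp)

theorem PK.sub {K : Set ℂ} [CompactSpace K] {g h : ℂ → ℂ} (hg : PK K g) (hh : PK K h) :
    PK K (fun z => g z - h z) := (hg.add hh.neg).congr (by intros; ring)

theorem PK.pow {K : Set ℂ} [CompactSpace K] {g : ℂ → ℂ} (hg : PK K g) (n : ℕ) :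
    PK K (fun z => g z ^ n) := by
  induction n with
  | zero => simpa using PK.const K 1
  | succ n ih => exact (ih.mul hg).congr (by intros; ring)

theorem PK.sum {K : Set ℂ} [CompactSpace K] {ι : Type*} (s : Finset ι) {g : ι → ℂ → ℂ} (hg : ∀ i ∈ s, PK K (g i)) :
    PK K (fun z => ∑ i ∈ s, g i z) := by
  classical
  induction s using Finset.induction_on with
  | empty => simpa using PK.const K 0
  | insert a s ha ih =>
    refine ((hg a (by simp)).add (ih fun i hi => hg i (by simp [hi]))).congr ?_
    intro z _; simp [Finset.sum_insert ha]

theorem PK.approx {K : Set ℂ} [CompactSpace K] {g : ℂ → ℂ} (hg : PK K g) {ε : ℝ} (hε : 0 < ε) :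
    ∃ P : Polynomial ℂ, ∀ z ∈ K, ‖P.eval z - g z‖ < ε := by
  obtain ⟨a, ha, ha'⟩ := hg
  rw [← SetLike.mem_coe, Subalgebra.topologicalClosure_coe, Metric.mem_closure_iff] at ha
  obtain ⟨b, hb, hab⟩ := ha ε hε
  rw [polynomialFunctions_coe] at hb
  obtain ⟨P, rfl⟩ := hb
  refine ⟨P, fun z hz => ?_⟩
  have := (ContinuousMap.dist_apply_le_dist (f := a) (g := Polynomial.toContinuousMapOnAlgHom K P)
    ⟨z, hz⟩).trans_lt hab
  rw [dist_comm, dist_eq_norm, ha'] at this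
  simpa using this

theorem PK.limit {K : Set ℂ} [CompactSpace K] {g : ℂ → ℂ} 
    (h : ∀ ε > 0, ∃ G, PK K G ∧ ∀ z ∈ K, ‖G z - g z‖ ≤ ε) : PK K g := by
  have hc : ContinuousOn g K := by
    refine Metric.continuousOn_iff.2 ?_
    intro z hz ε hε
    obtain ⟨G, ⟨a, ha, ha'⟩, hG⟩ := h (ε / 4) (by positivity)
    obtain ⟨d, hd, hd'⟩ := Metric.continuous_iff.1 a.continuous ⟨z, hz⟩ (ε / 4) (by positivity)
    refine ⟨d, hd, fun w hw hwz => ?_⟩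
    have h1 := hd' ⟨w, hw⟩ hwz
    rw [ha', ha'] at h1
    have h2 := hG z hz
    have h3 := hG w hw
    rw [← dist_eq_norm] at h2 h3
    calc dist (g w) (g z) ≤ dist (g w) (G w) + dist (G w) (G z) + dist (G z) (g z) :=
          dist_triangle4 _ _ _ _
      _ < ε := by rw [dist_comm (g w)]; simp only at h1; linarith
  refine ⟨⟨K.domRestrict g, hc.domRestrict⟩, ?_, fun z => rfl⟩
  rw [← SetLike.mem_coe, ← (Subalgebra.isClosed_topologicalClosure _).closure_eq,
    Metric.mem_closure_iff]
  intro ε hε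
  obtain ⟨G, ⟨a, ha, ha'⟩, hG⟩ := h (ε / 2) (by positivity)
  refine ⟨a, ha, lt_of_le_of_lt ?_ (half_lt_self hε)⟩
  rw [ContinuousMap.dist_le (by positivity)]
  intro z
  rw [dist_comm, dist_eq_norm, ha']
  exact hG z z.2

theorem PK.inv {K : Set ℂ} [CompactSpace K] (hcc : IsConnected Kᶜ) {b : ℂ} (hb : b ∉ K) :
    PK K (fun z => (z - b)⁻¹) := by
  let S := (polynomialFunctions K).topologicalClosure
  have : IsClosed (S : Set C(K, ℂ)) := Subalgebra.isClosed_topologicalClosure _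
  let X : C(K, ℂ) := Polynomial.toContinuousMapOn Polynomial.X K
  have hX : X ∈ S := by
    refine Subalgebra.le_topologicalClosure _ ?_
    rw [← SetLike.mem_coe, polynomialFunctions_coe]
    exact ⟨_, rfl⟩
  have hXa : ∀ z : K, X z = z := fun z => by simp [X]
  have hspec : spectrum ℂ X = K := by
    rw [ContinuousMap.spectrum_eq_range]
    ext w
    constructor
    · rintro ⟨z, rfl⟩; rw [hXa]; exact z.2
    · intro hw; exact ⟨⟨w, hw⟩, hXa _⟩
  have h1 := Subalgebra.spectrum_eq_of_isPreconnected_compl (𝕜 := ℂ) S ⟨X, hX⟩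
    (by simp only [hspec]; exact hcc.isPreconnected)
  have h2 : b ∉ spectrum ℂ (⟨X, hX⟩ : S) := by rw [h1]; simp only [hspec]; exact hb
  rw [spectrum.notMem_iff] at h2
  obtain ⟨u, hu⟩ := h2
  refine ⟨-((u⁻¹ : Sˣ) : S), neg_mem (SetLike.coe_mem _), fun z => ?_⟩
  have h3 : ((u : S) : C(K, ℂ)) * ((u⁻¹ : Sˣ) : S) = 1 := by
    have := u.mul_inv
    exact congrArg Subtype.val this
  have h4 := congrArg (fun F : C(K, ℂ) => F z) h3
  rw [hu] at h4
  have hzb : (z : ℂ) - b ≠ 0 := sub_ne_zero.2 fun e => hb (e ▸ z.2)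
  simp [hXa] at h4 ⊢
  refine eq_inv_of_mul_eq_one_left ?_
  linear_combination h4

theorem PK.comp {K : Set ℂ} [CompactSpace K] {v φ : ℂ → ℂ} (hv : PK K v)
    (hφ : DifferentiableOn ℂ φ (Metric.ball 0 1)) (hv1 : ∀ z ∈ K, ‖v z‖ ≤ 1 / 2) :
    PK K (fun z => φ (v z)) := by
  obtain ⟨R, hR⟩ : ∃ R : NNReal, (R : ℝ) = 3 / 4 := ⟨3 / 4, by norm_num⟩
  obtain ⟨r, hr⟩ : ∃ R : NNReal, (R : ℝ) = 5 / 8 := ⟨5 / 8, by norm_num⟩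
  have h1 := (DifferentiableOn.hasFPowerSeriesOnBall (R := R) (c := 0) (f := φ)
    (hφ.mono (Metric.closedBall_subset_ball (by rw [hR]; norm_num)))
    (by rw [← NNReal.coe_pos, hR]; norm_num))
  have h2 := h1.tendstoUniformlyOn (r' := r)
    (by rw [ENNReal.coe_lt_coe, ← NNReal.coe_lt_coe, hR, hr]; norm_num)
  rw [Metric.tendstoUniformlyOn_iff] at h2
  refine PK.limit fun ε hε => ?_
  obtain ⟨n, hn⟩ := (h2 ε hε).exists
  refine ⟨_, PK.sum (Finset.range n) (g := fun k z =>
     (v z) ^ k * (cauchyPowerSeries φ 0 R).coeff k)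
     fun i _ => (hv.pow i).mul (PK.const _ _), fun z hz => ?_⟩
  have := hn (v z) (by simp only [mem_ball_zero_iff, hr]; linarith [hv1 z hz])
  rw [dist_comm, dist_eq_norm] at this
  refine le_trans (le_of_eq ?_) this.le
  simp [FormalMultilinearSeries.partialSum]

/-- A logarithm of `(z-b)/(z-a)` on `K`, in the closure of polynomials, principal far from `a`. -/
def GoodLog (K : Set ℂ) [CompactSpace K] (a : ℂ) (r : ℝ) (b : ℂ) : Prop :=
  ∃ L : ℂ → ℂ, PK K L ∧ (∀ z ∈ K, Complex.exp (L z) = (z - b) / (z - a)) ∧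
    ∀ z ∈ K, 2 * r < ‖z - a‖ → L z = Complex.log ((z - b) / (z - a))

theorem goodLog_self {K : Set ℂ} [CompactSpace K] {a : ℂ} (ha : a ∉ K) (r : ℝ) :
    GoodLog K a r a := by
  have h : ∀ z ∈ K, (z - a) / (z - a) = 1 := fun z hz =>
    div_self (sub_ne_zero.2 fun e => ha (e ▸ hz))
  refine ⟨fun _ => 0, PK.const K 0, fun z hz => ?_, fun z hz _ => ?_⟩
  · simp [h z hz]
  · simp [h z hz]

theorem arg_lt_of_near {u : ℂ} (hu : ‖u - 1‖ < 1) : |u.arg| < Real.pi / 2 := by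
  rw [Complex.abs_arg_lt_pi_div_two_iff]
  left
  have := (Complex.abs_re_le_norm (u - 1)).trans_lt hu
  rw [abs_lt] at this
  simp at this
  linarith

theorem goodLog_step {K : Set ℂ} [CompactSpace K] (hcc : IsConnected Kᶜ) {a b b' : ℂ} {r : ℝ}
    (ha : a ∉ K) (hb : b ∉ K) (hr : 0 < r)
    (hbr : ‖b - a‖ ≤ r) (h : GoodLog K a r b) (hbb : ∀ z ∈ K, ‖b' - b‖ ≤ ‖z - b‖ / 2) :
    GoodLog K a r b' := by
  obtain ⟨L, hL, hexp, hlog⟩ := h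
  have hza : ∀ z ∈ K, z - a ≠ 0 := fun z hz => sub_ne_zero.2 fun e => ha (e ▸ hz)
  have hzb : ∀ z ∈ K, z - b ≠ 0 := fun z hz => sub_ne_zero.2 fun e => hb (e ▸ hz)
  have hv : ∀ z ∈ K, ‖(b - b') * (z - b)⁻¹‖ ≤ 1 / 2 := fun z hz => by
    have h0 : 0 < ‖z - b‖ := norm_pos_iff.2 (hzb z hz)
    rw [norm_mul, norm_inv, ← div_eq_mul_inv, div_le_iff₀ h0, norm_sub_rev]
    linarith [hbb z hz]
  have hv' : ∀ z ∈ K, 1 + (b - b') * (z - b)⁻¹ = (z - b') / (z - b) := fun z hz => by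
    have := hzb z hz
    field_simp
    ring
  have hzb' : ∀ z ∈ K, (z - b') / (z - b) ≠ 0 := fun z hz h0 => by
    have h1 := hv z hz
    rw [← hv' z hz] at h0
    have : (b - b') * (z - b)⁻¹ = -1 := by linear_combination h0
    rw [this] at h1
    norm_num at h1
  have hP : PK K (fun z => Complex.log (1 + (b - b') * (z - b)⁻¹)) := by
    refine PK.comp (v := fun z => (b - b') * (z - b)⁻¹) (φ := fun v => Complex.log (1 + v))
      ((PK.const K _).mul (PK.inv hcc hb)) ?_ hv
    intro v hv
    refine DifferentiableAt.differentiableWithinAt ?_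
    refine DifferentiableAt.clog (by fun_prop) ?_
    exact Complex.mem_slitPlane_of_norm_lt_one (by simpa using hv)
  refine ⟨_, hL.add hP, fun z hz => ?_, fun z hz hzr => ?_⟩
  · rw [Complex.exp_add, hexp z hz, hv' z hz, Complex.exp_log (hzb' z hz)]
    have := hzb z hz
    have := hza z hz
    field_simp
  · rw [hlog z hz hzr, hv' z hz, ← Complex.log_mul]
    · congr 1
      have := hzb z hz
      have := hza z hz
      field_simp
    · exact div_ne_zero (hzb z hz) (hza z hz)
    · exact hzb' z hz
    · have h1 := arg_lt_of_near (u := (z - b') / (z - b))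
        (by rw [← hv' z hz]; simpa using (hv z hz).trans_lt (by norm_num))
      have h2 := arg_lt_of_near (u := (z - b) / (z - a)) (by
        have h0 : 0 < ‖z - a‖ := norm_pos_iff.2 (hza z hz)
        have : (z - b) / (z - a) - 1 = (a - b) / (z - a) := by
          have := hza z hz
          field_simp
          ring
        rw [this, norm_div, div_lt_one h0, norm_sub_rev]
        linarith)
      rw [abs_lt] at h1 h2
      constructor <;> linarith

theorem exists_goodLog {K : Set ℂ} [CompactSpace K] (hcc : IsConnected Kᶜ) {a : ℂ} {r : ℝ}
    (ha : a ∉ K) (hr : 0 < r) : ∃ b, ‖b - a‖ = r ∧ GoodLog K a r b := by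
  have hKc : IsCompact K := isCompact_iff_compactSpace.mpr inferInstance
  have hpc : IsPathConnected Kᶜ := hKc.isClosed.isOpen_compl.isConnected_iff_isPathConnected.1 hcc
  obtain ⟨q, hqK, hqr⟩ : ∃ q ∈ Kᶜ, r ≤ ‖q - a‖ := by
    obtain ⟨R, hR⟩ := hKc.isBounded.subset_closedBall a
    refine ⟨a + ((max R r + 1 : ℝ) : ℂ), fun h => ?_, ?_⟩
    · have := hR h
      simp only [Metric.mem_closedBall, dist_self_add_left, Complex.norm_real] at this
      rw [Real.norm_eq_abs] at this
      linarith [le_abs_self (max R r + 1), le_max_left R r]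
    · rw [add_sub_cancel_left, Complex.norm_real, Real.norm_eq_abs]
      linarith [le_abs_self (max R r + 1), le_max_right R r]
  obtain ⟨γ, hγ⟩ := hpc.joinedIn a ha q hqK
  let γ' : ℝ → ℂ := fun t => γ.extend t
  have hγc : Continuous γ' := γ.continuous_extend
  have hγK : ∀ t, γ' t ∉ K := fun t => by
    obtain ⟨s, hs⟩ : γ' t ∈ Set.range γ := by
      rw [← γ.extend_range]; exact ⟨t, rfl⟩
    rw [← hs]; exact hγ s
  have h0 : γ' 0 = a := by simp [γ']
  have h1 : γ' 1 = q := by simp [γ']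
  let T : Set ℝ := Set.Icc 0 1 ∩ {t | r ≤ ‖γ' t - a‖}
  have hTc : IsClosed T := isClosed_Icc.inter (isClosed_le continuous_const (by fun_prop))
  have hTn : T.Nonempty := ⟨1, by simp, by simpa [h1] using hqr⟩
  have hTb : BddBelow T := ⟨0, fun t ht => ht.1.1⟩
  have ht0 := hTc.csInf_mem hTn hTb
  set t0 := sInf T with ht0d
  have hlt : ∀ t ∈ Set.Ico 0 t0, ‖γ' t - a‖ < r := fun t ht => by
    by_contra hcon
    have : t ∈ T := ⟨⟨ht.1, ht.2.le.trans ht0.1.2⟩, not_lt.1 hcon⟩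
    exact absurd (csInf_le hTb this) (not_le.2 ht.2)
  have ht0pos : 0 < t0 := by
    rcases ht0.1.1.lt_or_eq with h | h
    · exact h
    · have := ht0.2
      rw [← h] at this
      simp [h0] at this
      linarith
  have hle : ∀ t ∈ Set.Icc 0 t0, ‖γ' t - a‖ ≤ r := by
    have hcl : IsClosed {t | ‖γ' t - a‖ ≤ r} := isClosed_le (by fun_prop) continuous_const
    have := hcl.closure_subset_iff.2 (show Set.Ico 0 t0 ⊆ _ from fun t ht => (hlt t ht).le)
    rw [closure_Ico ht0pos.ne] at this
    exact this
  refine ⟨γ' t0, le_antisymm (hle t0 ⟨ht0pos.le, le_rfl⟩) ht0.2, ?_⟩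
  have key := (isPreconnected_Icc (a := (0:ℝ)) (b := t0)).induction₂'
    (fun s t => GoodLog K a r (γ' s) → GoodLog K a r (γ' t)) ?_
    (fun x y z _ _ _ h1 h2 h3 => h2 (h1 h3)) (x := 0) (y := t0) ⟨le_rfl, ht0pos.le⟩
    ⟨ht0pos.le, le_rfl⟩
  · exact key (by rw [h0]; exact goodLog_self ha r)
  · intro s hs
    obtain ⟨δ, hδ, hδK⟩ := Metric.isOpen_iff.1 hKc.isClosed.isOpen_compl (γ' s) (hγK s)
    have hd : ∀ z ∈ K, δ ≤ ‖z - γ' s‖ := fun z hz => by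
      by_contra hcon
      exact hδK (by simpa [dist_eq_norm] using hcon : z ∈ Metric.ball (γ' s) δ) hz
    have hev : ∀ᶠ t in nhdsWithin s (Set.Icc 0 t0), ‖γ' t - γ' s‖ < δ / 4 := by
      refine Filter.Eventually.filter_mono nhdsWithin_le_nhds ?_
      have : Filter.Tendsto (fun t => ‖γ' t - γ' s‖) (nhds s) (nhds ‖γ' s - γ' s‖) :=
        Continuous.tendsto (by fun_prop) s
      refine this.eventually_lt_const ?_
      simp; positivity
    filter_upwards [hev, self_mem_nhdsWithin] with t ht hts
    constructor
    · intro h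
      refine goodLog_step hcc ha (hγK s) hr (hle s hs) h fun z hz => ?_
      linarith [hd z hz]
    · intro h
      refine goodLog_step hcc ha (hγK t) hr (hle t hts) h fun z hz => ?_
      have h1 := hd z hz
      have h2 : ‖z - γ' s‖ ≤ ‖z - γ' t‖ + ‖γ' t - γ' s‖ := norm_sub_le_norm_sub_add_norm_sub _ _ _
      rw [norm_sub_rev (γ' s)]
      linarith

theorem PK.exp {K : Set ℂ} [CompactSpace K] {L : ℂ → ℂ} (hL : PK K L) :
    PK K (fun z => Complex.exp (L z)) := by
  obtain ⟨B, hB⟩ : ∃ B : ℝ, ∀ z ∈ K, ‖L z‖ ≤ B := by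
    obtain ⟨h, _, hh⟩ := hL
    exact ⟨‖h‖, fun z hz => by rw [← hh ⟨z, hz⟩]; exact h.norm_coe_le_norm _⟩
  obtain ⟨N, hN⟩ := exists_nat_gt (max (2 * B) 0)
  have hN0 : (0:ℝ) < N := (le_max_right _ _).trans_lt hN
  have hNB : 2 * B < N := (le_max_left _ _).trans_lt hN
  have h1 : PK K (fun z => Complex.exp ((1 / (N:ℂ)) * L z)) := by
    refine PK.comp (v := fun z => (1 / (N:ℂ)) * L z) ((PK.const K _).mul hL)
      Complex.differentiable_exp.differentiableOn fun z hz => ?_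
    rw [norm_mul, norm_div, norm_one, Complex.norm_natCast, div_mul_eq_mul_div, div_le_iff₀ hN0]
    linarith [hB z hz]
  refine (h1.pow N).congr fun z _ => ?_
  rw [← Complex.exp_nat_mul]
  congr 1
  have : (N:ℂ) ≠ 0 := by exact_mod_cast hN0.ne'
  field_simp

theorem exists_g {K : Set ℂ} [CompactSpace K] (hcc : IsConnected Kᶜ) {a : ℂ} {r : ℝ}
    (ha : a ∉ K) (hr : 0 < r) : ∃ (g : ℂ → ℂ) (c : ℂ), PK K g ∧ ‖c - a‖ ≤ r / 2 ∧
      (∀ z ∈ K, ‖g z‖ ≤ 76 / r) ∧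
      (∀ z ∈ K, 4 * r < ‖z - a‖ → ‖g z‖ ≤ 2 / ‖z - c‖ ∧
        ‖g z - (z - c)⁻¹‖ ≤ r ^ 2 / 4 / ‖z - c‖ ^ 3) := by
  obtain ⟨b, hb, L, hL, hexp, hlog⟩ := exists_goodLog hcc ha hr
  have hza : ∀ z ∈ K, z - a ≠ 0 := fun z hz => sub_ne_zero.2 fun e => ha (e ▸ hz)
  have hS : PK K (fun z => (z - a) * Complex.exp (L z / 2)) := by
    exact ((PK.id K).sub (PK.const K a)).mul (((PK.const K (1/2)).mul hL).exp.congr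
      fun z _ => by ring_nf)
  set s : ℂ → ℂ := fun z => (z - a) * Complex.exp (L z / 2) with hs
  set c : ℂ := (a + b) / 2 with hc
  set d : ℂ := (b - a) / 2 with hd
  have hdn : ‖d‖ = r / 2 := by rw [hd, norm_div, hb]; simp
  have hd0 : d ≠ 0 := by rw [← norm_pos_iff, hdn]; positivity
  have hca : c - a = d := by rw [hc, hd]; ring
  have hs2 : ∀ z ∈ K, s z ^ 2 = (z - a) * (z - b) := fun z hz => by
    have h1 : Complex.exp (L z / 2) ^ 2 = (z - b) / (z - a) := by
      rw [← hexp z hz, ← Complex.exp_nat_mul]; congr 1; push_cast; ring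
    rw [hs]
    simp only
    rw [mul_pow, h1]
    have := hza z hz
    field_simp
  have hprod : ∀ z ∈ K, (z - c - s z) * (z - c + s z) = d ^ 2 := fun z hz => by
    have := hs2 z hz
    rw [hc, hd]
    linear_combination -this
  have hfar : ∀ z ∈ K, 4 * r < ‖z - a‖ → ‖z - c‖ ≤ ‖z - c + s z‖ ∧ 3 * r ≤ ‖z - c‖ := by
    intro z hz hzr
    have h0 : 0 < ‖z - a‖ := norm_pos_iff.2 (hza z hz)
    set v := Complex.exp (L z / 2) with hv
    have hv2 : v ^ 2 = (z - b) / (z - a) := by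
      rw [← hexp z hz, hv, ← Complex.exp_nat_mul]; congr 1; push_cast; ring
    have hw1 : (z - b) / (z - a) - 1 = (a - b) / (z - a) := by
      have := hza z hz
      field_simp
      ring
    have hvre : 0 ≤ v.re := by
      rw [hv, hlog z hz (by linarith), Complex.exp_re]
      refine mul_nonneg (Real.exp_pos _).le (Real.cos_nonneg_of_mem_Icc ?_)
      have h1 := arg_lt_of_near (u := (z - b) / (z - a)) (by
        rw [hw1, norm_div, div_lt_one h0, norm_sub_rev, hb]; linarith)
      rw [abs_lt] at h1
      have h2 : (Complex.log ((z - b) / (z - a)) / 2).im = ((z - b) / (z - a)).arg / 2 := by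
        rw [show (2:ℂ) = ((2:ℝ):ℂ) by norm_num, Complex.div_ofReal_im, Complex.log_im]
      rw [h2]
      constructor <;> linarith [Real.pi_pos]
    have hv1 : 1 ≤ ‖v + 1‖ := by
      refine le_trans ?_ ((le_abs_self _).trans (Complex.abs_re_le_norm (v + 1)))
      simp; linarith
    have hsz : s z - (z - a) = (z - a) * (v - 1) := by rw [hs]; simp only; ring
    have hss : ‖s z - (z - a)‖ ≤ r := by
      have h1 : (s z - (z - a)) * (v + 1) = a - b := by
        have h2 : (v - 1) * (v + 1) = (a - b) / (z - a) := by rw [← hw1, ← hv2]; ring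
        rw [hsz, mul_assoc, h2]
        have := hza z hz
        field_simp
      have h3 : ‖s z - (z - a)‖ * ‖v + 1‖ = r := by
        rw [← norm_mul, h1, norm_sub_rev, hb]
      nlinarith [norm_nonneg (s z - (z - a))]
    have hzc : ‖z - a‖ ≤ ‖z - c‖ + ‖c - a‖ := norm_sub_le_norm_sub_add_norm_sub _ _ _
    rw [hca, hdn] at hzc
    refine ⟨?_, by linarith⟩
    have h4 : z - c + s z = 2 * (z - c) - (-(c - a) - (s z - (z - a))) := by ring
    have h5 : ‖-(c - a) - (s z - (z - a))‖ ≤ r / 2 + r := by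
      refine (norm_sub_le _ _).trans (add_le_add ?_ hss)
      rw [norm_neg, hca, hdn]
    have h6 := norm_sub_norm_le (2 * (z - c)) (-(c - a) - (s z - (z - a)))
    rw [← h4, norm_mul, show ‖(2:ℂ)‖ = 2 by norm_num] at h6
    linarith
  have hd2 : ‖d ^ 2‖ = r ^ 2 / 4 := by rw [norm_pow, hdn]; ring
  have hgn : ∀ z, ‖2 / d ^ 2 * (z - c - s z)‖ = 8 / r ^ 2 * ‖z - c - s z‖ := fun z => by
    rw [norm_mul, norm_div, hd2]; simp; field_simp; norm_num
  have hphi : ∀ z ∈ K, 4 * r < ‖z - a‖ → ‖z - c - s z‖ ≤ r ^ 2 / 4 / ‖z - c‖ := by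
    intro z hz hzr
    obtain ⟨h1, h2⟩ := hfar z hz hzr
    rw [le_div_iff₀ (by linarith), ← hd2, ← hprod z hz, norm_mul]
    exact mul_le_mul_of_nonneg_left h1 (norm_nonneg _)
  have hA : ∀ z ∈ K, 4 * r < ‖z - a‖ → ‖2 / d ^ 2 * (z - c - s z)‖ ≤ 2 / ‖z - c‖ := by
    intro z hz hzr
    have h1 := hphi z hz hzr
    have h2 := (hfar z hz hzr).2
    have h3 : 0 < ‖z - c‖ := by linarith
    rw [hgn]
    calc 8 / r ^ 2 * ‖z - c - s z‖ ≤ 8 / r ^ 2 * (r ^ 2 / 4 / ‖z - c‖) := by gcongr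
      _ = 2 / ‖z - c‖ := by field_simp; norm_num
  refine ⟨fun z => 2 / d ^ 2 * (z - c - s z), c,
    (PK.const K _).mul (((PK.id K).sub (PK.const K c)).sub hS), by rw [hca, hdn],
    fun z hz => ?_, fun z hz hzr => ⟨hA z hz hzr, ?_⟩⟩
  · by_cases hzr : 4 * r < ‖z - a‖
    · refine (hA z hz hzr).trans ?_
      have := (hfar z hz hzr).2
      rw [div_le_div_iff₀ (by linarith) hr]
      linarith
    · simp only
      rw [hgn]
      have h1 : ‖z - b‖ ≤ ‖z - a‖ + ‖a - b‖ := norm_sub_le_norm_sub_add_norm_sub _ _ _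
      rw [norm_sub_rev a, hb] at h1
      have h2 : ‖z - c‖ ≤ ‖z - a‖ + ‖a - c‖ := norm_sub_le_norm_sub_add_norm_sub _ _ _
      rw [norm_sub_rev a, hca, hdn] at h2
      have h3 : ‖s z‖ ≤ 5 * r := by
        refine le_of_sq_le_sq ?_ (by positivity)
        rw [← norm_pow, hs2 z hz, norm_mul]
        nlinarith [norm_nonneg (z - a), norm_nonneg (z - b)]
      have h4 : ‖z - c - s z‖ ≤ 19 / 2 * r := (norm_sub_le _ _).trans (by linarith)
      calc 8 / r ^ 2 * ‖z - c - s z‖ ≤ 8 / r ^ 2 * (19 / 2 * r) := by gcongr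
        _ = 76 / r := by field_simp; norm_num
  · have h1 := hphi z hz hzr
    have h2 := (hfar z hz hzr).2
    have h3 : 0 < ‖z - c‖ := by linarith
    have h3' : z - c ≠ 0 := norm_pos_iff.1 h3
    have h4 : 2 / d ^ 2 * (z - c - s z) - (z - c)⁻¹ = (z - c - s z) ^ 2 / (d ^ 2 * (z - c)) := by
      field_simp
      linear_combination hprod z hz
    simp only
    rw [h4, norm_div, norm_mul, norm_pow, hd2]
    calc ‖z - c - s z‖ ^ 2 / (r ^ 2 / 4 * ‖z - c‖) ≤
        (r ^ 2 / 4 / ‖z - c‖) ^ 2 / (r ^ 2 / 4 * ‖z - c‖) := by gcongr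
      _ = _ := by field_simp

theorem key_lemma {K : Set ℂ} [CompactSpace K] (hcc : IsConnected Kᶜ) {a : ℂ} {r : ℝ}
    (ha : a ∉ K) (hr : 0 < r) : ∃ (g : ℂ → ℂ) (c : ℂ), PK K g ∧
      ∀ η, ‖η - a‖ < 2 * r → ∀ z ∈ K, z ≠ η → ‖g z + (η - c) * g z ^ 2 - (z - η)⁻¹‖ ≤
        10 ^ 7 * (r ^ 2 / (‖z - η‖ * (r ^ 2 + ‖z - η‖ ^ 2))) := by
  obtain ⟨g, c, hg, hca, hb, hfar⟩ := exists_g hcc ha hr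
  refine ⟨g, c, hg, fun η hη z hz hzη => ?_⟩
  have ht : 0 < ‖z - η‖ := norm_pos_iff.2 (sub_ne_zero.2 hzη)
  have hec : ‖η - c‖ ≤ 5 / 2 * r := by
    have : ‖η - c‖ ≤ ‖η - a‖ + ‖a - c‖ := norm_sub_le_norm_sub_add_norm_sub _ _ _
    rw [norm_sub_rev a] at this
    linarith
  set t := ‖z - η‖ with htd
  by_cases hn : t < 8 * r
  · have h1 : ‖g z + (η - c) * g z ^ 2‖ ≤ 15000 / r := by
      calc _ ≤ ‖g z‖ + ‖(η - c) * g z ^ 2‖ := norm_add_le _ _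
        _ = ‖g z‖ + ‖η - c‖ * ‖g z‖ ^ 2 := by rw [norm_mul, norm_pow]
        _ ≤ 76 / r + 5 / 2 * r * (76 / r) ^ 2 := by gcongr <;> exact hb z hz
        _ = 14516 / r := by field_simp; norm_num
        _ ≤ _ := by gcongr; norm_num
    have h2 : ‖g z + (η - c) * g z ^ 2 - (z - η)⁻¹‖ ≤ 15000 / r + t⁻¹ := by
      refine (norm_sub_le _ _).trans ?_
      rw [norm_inv]; linarith
    refine h2.trans ?_
    have h3 : 15000 / r ≤ 120000 / t := by
      rw [div_le_div_iff₀ hr ht]; linarith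
    have h4 : (65 * t)⁻¹ ≤ r ^ 2 / (t * (r ^ 2 + t ^ 2)) := by
      rw [inv_eq_one_div, div_le_div_iff₀ (by positivity) (by positivity)]
      have : t ^ 2 ≤ 64 * r ^ 2 := by nlinarith
      nlinarith
    have h5 : (65 * t)⁻¹ = t⁻¹ / 65 := by field_simp
    rw [h5] at h4
    have h6 : 120000 / t = 120000 * t⁻¹ := by field_simp
    have h7 : 0 < t⁻¹ := by positivity
    linarith
  · push Not at hn
    have hza : 4 * r < ‖z - a‖ := by
      have : ‖z - η‖ ≤ ‖z - a‖ + ‖a - η‖ := norm_sub_le_norm_sub_add_norm_sub _ _ _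
      rw [norm_sub_rev a] at this
      linarith
    obtain ⟨h1, h2⟩ := hfar z hz hza
    have hzc : t ≤ ‖z - c‖ + ‖η - c‖ := by
      have : ‖z - η‖ ≤ ‖z - c‖ + ‖c - η‖ := norm_sub_le_norm_sub_add_norm_sub _ _ _
      rwa [norm_sub_rev c] at this
    have hzc2 : t / 2 ≤ ‖z - c‖ := by linarith
    have hzc0 : z - c ≠ 0 := norm_pos_iff.1 (by linarith)
    have hzη0 : z - η ≠ 0 := norm_pos_iff.1 ht
    set x := (z - c)⁻¹ with hx
    have hxn : ‖x‖ ≤ 2 / t := by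
      rw [hx, norm_inv, inv_eq_one_div, div_le_div_iff₀ (by linarith) ht]; linarith
    have hgx : ‖g z - x‖ ≤ 2 * r ^ 2 / t ^ 3 := by
      refine h2.trans ?_
      calc r ^ 2 / 4 / ‖z - c‖ ^ 3 ≤ r ^ 2 / 4 / (t / 2) ^ 3 := by gcongr
        _ = _ := by field_simp; norm_num
    have hgn : ‖g z‖ ≤ 4 / t := by
      refine h1.trans ?_
      rw [div_le_div_iff₀ (by linarith) ht]; linarith
    have hid : g z + (η - c) * g z ^ 2 - (z - η)⁻¹ =
        (g z - x) + (η - c) * ((g z - x) * (g z + x)) - (η - c) ^ 2 * (x ^ 2 * (z - η)⁻¹) := by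
      have : (z - η)⁻¹ = x + (η - c) * x ^ 2 + (η - c) ^ 2 * (x ^ 2 * (z - η)⁻¹) := by
        rw [hx]; field_simp; ring
      linear_combination -this
    have hrt : r / t ≤ 1 / 8 := by rw [div_le_div_iff₀ ht (by norm_num)]; linarith
    have hmain : ‖g z + (η - c) * g z ^ 2 - (z - η)⁻¹‖ ≤ 100 * r ^ 2 / t ^ 3 := by
      rw [hid]
      have e1 : ‖(η - c) * ((g z - x) * (g z + x))‖ ≤
          5 / 2 * r * (2 * r ^ 2 / t ^ 3 * (4 / t + 2 / t)) := by
        rw [norm_mul, norm_mul]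
        gcongr
        exact (norm_add_le _ _).trans (add_le_add hgn hxn)
      have e2 : ‖(η - c) ^ 2 * (x ^ 2 * (z - η)⁻¹)‖ ≤ (5 / 2 * r) ^ 2 * ((2 / t) ^ 2 * t⁻¹) := by
        have e0 : ‖(z - η)⁻¹‖ ≤ t⁻¹ := by rw [norm_inv]
        rw [norm_mul, norm_mul, norm_pow, norm_pow]
        gcongr
      have e3 : 5 / 2 * r * (2 * r ^ 2 / t ^ 3 * (4 / t + 2 / t)) = 30 * (r / t) * (r ^ 2 / t ^ 3) := by
        field_simp; norm_num
      have e4 : (5 / 2 * r) ^ 2 * ((2 / t) ^ 2 * t⁻¹) = 25 * (r ^ 2 / t ^ 3) := by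
        field_simp; norm_num
      have e5 : 30 * (r / t) * (r ^ 2 / t ^ 3) ≤ 30 * (1 / 8) * (r ^ 2 / t ^ 3) := by gcongr
      have e6 : 0 ≤ r ^ 2 / t ^ 3 := by positivity
      have e7 : 100 * r ^ 2 / t ^ 3 = 100 * (r ^ 2 / t ^ 3) := by ring
      have e8 : 2 * r ^ 2 / t ^ 3 = 2 * (r ^ 2 / t ^ 3) := by ring
      refine (norm_sub_le _ _).trans ?_
      have := norm_add_le (g z - x) ((η - c) * ((g z - x) * (g z + x)))
      linarith
    refine hmain.trans ?_
    have : 10 ^ 7 * (r ^ 2 / (t * (r ^ 2 + t ^ 2))) = 10 ^ 7 * r ^ 2 / (t * (r ^ 2 + t ^ 2)) := by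
      ring
    rw [this, div_le_div_iff₀ (by positivity) (by positivity)]
    have : r ^ 2 ≤ t ^ 2 := by nlinarith
    have h9 : t * (r ^ 2 + t ^ 2) ≤ 2 * t ^ 3 := by nlinarith
    have : 0 ≤ r ^ 2 * t ^ 3 := by positivity
    calc 100 * r ^ 2 * (t * (r ^ 2 + t ^ 2)) ≤ 100 * r ^ 2 * (2 * t ^ 3) := by gcongr
      _ ≤ _ := by nlinarith

/-- The radial error kernel. -/
noncomputable def kap (r : ℝ) (w : ℂ) : ℝ := r ^ 2 / (‖w‖ * (r ^ 2 + ‖w‖ ^ 2))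

theorem kap_nonneg (r : ℝ) (w : ℂ) : 0 ≤ kap r w := by unfold kap; positivity

theorem integrable_kap {r : ℝ} (hr : 0 < r) : MeasureTheory.Integrable (kap r) := by
  have h1 : MeasureTheory.Integrable (kap 1) := by
    have := (MeasureTheory.integrable_fun_norm_addHaar (E := ℂ) MeasureTheory.volume
      (f := fun t : ℝ => 1 ^ 2 / (t * (1 ^ 2 + t ^ 2)))).2 ?_
    · exact this
    · rw [Complex.finrank_real_complex]
      refine (integrable_inv_one_add_sq.integrableOn (s := Set.Ioi 0)).congr_fun ?_
        measurableSet_Ioi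
      intro t ht
      have : (t:ℝ) ≠ 0 := (Set.mem_Ioi.1 ht).ne'
      simp
      field_simp
  have h2 := (h1.comp_smul (R := r⁻¹) (by positivity)).const_mul (r⁻¹)
  refine h2.congr (Filter.Eventually.of_forall fun x => ?_)
  unfold kap
  simp only [norm_smul, norm_inv, Real.norm_eq_abs, abs_of_pos hr]
  by_cases hx : ‖x‖ = 0
  · simp [hx]
  · field_simp

theorem integral_kap {r : ℝ} (hr : 0 < r) : ∫ w, kap r w = r * ∫ w, kap 1 w := by
  have h := MeasureTheory.Measure.integral_comp_smul (MeasureTheory.volume : MeasureTheory.Measure ℂ)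
    (kap 1) r⁻¹
  have h2 : ∀ x, kap r x = r⁻¹ * kap 1 (r⁻¹ • x) := fun x => by
    unfold kap
    simp only [norm_smul, norm_inv, Real.norm_eq_abs, abs_of_pos hr]
    by_cases hx : ‖x‖ = 0
    · simp [hx]
    · field_simp
  simp_rw [h2]
  rw [MeasureTheory.integral_const_mul, h, Complex.finrank_real_complex]
  rw [abs_of_pos (by positivity)]
  simp
  field_simp

theorem integrable_cauchy {H : ℂ → ℂ} (hHm : Continuous H) {B R : ℝ} (hB : ∀ η, ‖H η‖ ≤ B)
    (hR : ∀ η, R < ‖η‖ → H η = 0) (z : ℂ) :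
    MeasureTheory.Integrable (fun η => H η * (z - η)⁻¹) := by
  have hB0 : 0 ≤ B := (norm_nonneg _).trans (hB 0)
  refine MeasureTheory.Integrable.mono' (((integrable_kap one_pos).comp_sub_left z).const_mul
    (B * (1 + (R + ‖z‖) ^ 2))) ?_ (Filter.Eventually.of_forall fun η => ?_)
  · have : Measurable fun η => H η * (z - η)⁻¹ := by
      have := hHm.measurable
      fun_prop
    exact this.aestronglyMeasurable
  · by_cases h : R < ‖η‖
    · rw [hR η h]
      simp only [zero_mul, norm_zero]
      have := kap_nonneg 1 (z - η)
      positivity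
    · rw [norm_mul, mul_assoc]
      refine mul_le_mul (hB η) ?_ (norm_nonneg _) hB0
      rw [norm_inv]
      unfold kap
      by_cases h0 : ‖z - η‖ = 0
      · simp [h0]
      have h0' : 0 < ‖z - η‖ := lt_of_le_of_ne (norm_nonneg _) (Ne.symm h0)
      rw [mul_div_assoc', le_div_iff₀ (by positivity)]
      have h1 : ‖z - η‖ ≤ R + ‖z‖ := by
        have := norm_sub_le z η
        linarith
      have h2 : ‖z - η‖ ^ 2 ≤ (R + ‖z‖) ^ 2 := by gcongr
      rw [inv_mul_cancel_left₀ h0]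
      linarith

open MeasureTheory in
theorem glue {K : Set ℂ} [CompactSpace K] (hcc : IsConnected Kᶜ) {r : ℝ} (hr : 0 < r)
    {H : ℂ → ℂ} (hHm : Continuous H) {B R : ℝ} (hB : ∀ η, ‖H η‖ ≤ B)
    (hR : ∀ η, R < ‖η‖ → H η = 0) (hK : ∀ η, Metric.closedBall η r ⊆ K → H η = 0) :
    ∃ F, PK K F ∧ ∀ z ∈ K, ‖F z - ∫ η, H η * (z - η)⁻¹‖ ≤ 10 ^ 7 * B * (r * ∫ w, kap 1 w) := by
  have hB0 : 0 ≤ B := (norm_nonneg _).trans (hB 0)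
  have hint := integrable_cauchy hHm hB hR
  have hkint : ∀ z, Integrable (fun η => kap r (z - η)) := fun z =>
    (integrable_kap hr).comp_sub_left z
  have hHs : HasCompactSupport H :=
    HasCompactSupport.intro (isCompact_closedBall (0:ℂ) R) fun η hη => hR η (by simpa using hη)
  have hHi : Integrable H := hHm.integrable_of_hasCompactSupport hHs
  have hHi2 : ∀ c : ℂ, Integrable (fun η => H η * (η - c)) := fun c =>
    (hHm.mul (by fun_prop : Continuous fun η : ℂ => η - c)).integrable_of_hasCompactSupport
      hHs.mul_right
  have main : ∀ E' ⊆ Metric.closedBall (0:ℂ) R, MeasurableSet E' → ∃ F, PK K F ∧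
      ∀ z ∈ K, ‖F z - ∫ η in E', H η * (z - η)⁻¹‖ ≤ 10 ^ 7 * B * ∫ η in E', kap r (z - η) := by
    have key := (isCompact_closedBall (0:ℂ) R).induction_on (p := fun E =>
      ∃ U, MeasurableSet U ∧ E ⊆ U ∧ ∀ E' ⊆ U, MeasurableSet E' →
      ∃ F, PK K F ∧ ∀ z ∈ K, ‖F z - ∫ η in E', H η * (z - η)⁻¹‖ ≤
        10 ^ 7 * B * ∫ η in E', kap r (z - η)) ?_ ?_ ?_ ?_
    · obtain ⟨U, _, hU, h⟩ := key
      exact fun E' hE' hm => h E' (hE'.trans hU) hm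
    · refine ⟨∅, MeasurableSet.empty, subset_rfl, ?_⟩
      intro E' hE' _
      rw [Set.subset_empty_iff] at hE'
      subst hE'
      exact ⟨fun _ => 0, PK.const K 0, fun z _ => by simp⟩
    · rintro s t hst ⟨U, hU, htU, h⟩
      exact ⟨U, hU, hst.trans htU, h⟩
    · rintro s t ⟨S, hSm, hsS, hs⟩ ⟨T, hTm, htT, ht⟩
      refine ⟨S ∪ T, hSm.union hTm, Set.union_subset_union hsS htT, ?_⟩
      intro E' hE' hm
      obtain ⟨F1, hF1, hF1'⟩ := hs (E' ∩ S) Set.inter_subset_right (hm.inter hSm)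
      obtain ⟨F2, hF2, hF2'⟩ := ht (E' \ S) (by
        rintro x ⟨hx, hx'⟩
        exact (hE' hx).resolve_left hx') (hm.diff hSm)
      refine ⟨_, hF1.add hF2, fun z hz => ?_⟩
      rw [← integral_inter_add_diff hSm (hint z).integrableOn,
        ← integral_inter_add_diff hSm (hkint z).integrableOn, add_sub_add_comm, mul_add]
      exact (norm_add_le _ _).trans (add_le_add (hF1' z hz) (hF2' z hz))
    · intro η0 _
      by_cases hp : ∃ p, p ∉ K ∧ ‖η0 - p‖ < 2 * r
      · obtain ⟨p, hpK, hp⟩ := hp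
        obtain ⟨g, c, hg, hgb⟩ := key_lemma hcc hpK hr
        refine ⟨Metric.ball p (2 * r), mem_nhdsWithin_of_mem_nhds
          (Metric.isOpen_ball.mem_nhds (by simpa [dist_eq_norm] using hp)),
          Metric.ball p (2 * r), measurableSet_ball, subset_rfl, fun E' hE' hm => ?_⟩
        refine ⟨fun z => (∫ η in E', H η) * g z + (∫ η in E', H η * (η - c)) * g z ^ 2,
          ((PK.const K _).mul hg).add ((PK.const K _).mul (hg.pow 2)), fun z hz => ?_⟩
        have e1 : (∫ η in E', H η) * g z + (∫ η in E', H η * (η - c)) * g z ^ 2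
            - ∫ η in E', H η * (z - η)⁻¹ =
            ∫ η in E', H η * (g z + (η - c) * g z ^ 2 - (z - η)⁻¹) := by
          rw [← integral_mul_const, ← integral_mul_const, ← integral_add, ← integral_sub]
          · congr 1
            ext η
            ring
          · exact ((hHi.mul_const _).add ((hHi2 c).mul_const _)).integrableOn
          · exact (hint z).integrableOn
          · exact (hHi.mul_const _).integrableOn
          · exact ((hHi2 c).mul_const _).integrableOn
        rw [e1, ← integral_const_mul]
        refine norm_integral_le_of_norm_le ((hkint z).const_mul _).integrableOn ?_
        rw [ae_restrict_iff' hm]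
        have hne : ∀ᵐ η : ℂ, η ≠ z := by simp [ae_iff]
        filter_upwards [hne] with η hηz hηE
        rw [norm_mul]
        have h1 := hgb η (by simpa [dist_eq_norm] using hE' hηE) z hz (Ne.symm hηz)
        calc _ ≤ B * (10 ^ 7 * (r ^ 2 / (‖z - η‖ * (r ^ 2 + ‖z - η‖ ^ 2)))) :=
              mul_le_mul (hB η) h1 (norm_nonneg _) hB0
          _ = _ := by unfold kap; ring
      · push Not at hp
        refine ⟨Metric.ball η0 r, mem_nhdsWithin_of_mem_nhds (Metric.ball_mem_nhds _ hr),
          Metric.ball η0 r, measurableSet_ball, subset_rfl, fun E' hE' hm => ?_⟩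
        refine ⟨fun _ => 0, PK.const K 0, fun z hz => ?_⟩
        have : ∫ η in E', H η * (z - η)⁻¹ = 0 := by
          refine setIntegral_eq_zero_of_forall_eq_zero fun η hη => ?_
          rw [hK η, zero_mul]
          intro w hw
          by_contra hwK
          have h1 := hp w hwK
          have h2 := hE' hη
          rw [Metric.mem_ball, dist_comm, dist_eq_norm] at h2
          rw [Metric.mem_closedBall, dist_comm, dist_eq_norm] at hw
          have : ‖η0 - w‖ ≤ ‖η0 - η‖ + ‖η - w‖ := norm_sub_le_norm_sub_add_norm_sub _ _ _
          linarith
        rw [this]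
        simp only [sub_zero, norm_zero]
        have : 0 ≤ ∫ η in E', kap r (z - η) := integral_nonneg fun η => kap_nonneg _ _
        positivity
  obtain ⟨F, hF, hF'⟩ := main _ subset_rfl measurableSet_closedBall
  refine ⟨F, hF, fun z hz => ?_⟩
  have h1 := hF' z hz
  rw [setIntegral_eq_integral_of_forall_compl_eq_zero] at h1
  · refine h1.trans ?_
    gcongr
    rw [← integral_kap hr, ← integral_sub_left_eq_self (kap r) _ z]
    exact setIntegral_le_integral (hkint z) (Filter.Eventually.of_forall fun η => kap_nonneg _ _)
  · intro η hη
    rw [hR η (by simpa using hη), zero_mul]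

open MeasureTheory in
theorem circle_inner {r : ℝ} (hr : 0 < r) (v : ℂ) (hv : ‖v‖ ≠ r) :
    ∫ θ in (0:ℝ)..2 * Real.pi, circleMap 0 r θ * (circleMap 0 r θ - v)⁻¹ =
      if ‖v‖ < r then (2 * Real.pi : ℂ) else 0 := by
  have h1 : (∮ u in C(0, r), (u - v)⁻¹) =
      Complex.I * ∫ θ in (0:ℝ)..2 * Real.pi, circleMap 0 r θ * (circleMap 0 r θ - v)⁻¹ := by
    rw [circleIntegral, ← intervalIntegral.integral_const_mul]
    congr 1
    ext θ
    simp only [deriv_circleMap, smul_eq_mul]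
    ring
  split_ifs with h
  · rw [circleIntegral.integral_sub_inv_of_mem_ball (by simpa using h)] at h1
    have := Complex.I_ne_zero
    apply mul_left_cancel₀ Complex.I_ne_zero
    rw [← h1]; ring
  · have hlt : r < ‖v‖ := lt_of_le_of_ne (not_lt.1 h) (Ne.symm hv)
    have hne : ∀ u ∈ Metric.closedBall (0:ℂ) r, u - v ≠ 0 := fun u hu h0 => by
      rw [sub_eq_zero] at h0
      rw [mem_closedBall_zero_iff, h0] at hu
      linarith
    have h2 : (∮ u in C(0, r), (u - v)⁻¹) = 0 := by
      refine Complex.circleIntegral_eq_zero_of_differentiable_on_off_countable hr.le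
        Set.countable_empty ?_ ?_
      · exact ContinuousOn.inv₀ (by fun_prop) hne
      · intro u hu
        exact DifferentiableAt.inv (by fun_prop) (hne u (Metric.ball_subset_closedBall hu.1))
    rw [h2] at h1
    exact ((mul_eq_zero.1 h1.symm).resolve_left Complex.I_ne_zero)

/-- Circular moment of `f`. -/
noncomputable def cm (f : ℂ → ℂ) (r : ℝ) (η : ℂ) : ℂ :=
  ∫ θ in (0:ℝ)..2 * Real.pi, f (η + circleMap 0 r θ) * circleMap 0 r θ

open MeasureTheory in
theorem smoothing {f : ℂ → ℂ} (hf : Continuous f) {B R : ℝ} (hB : ∀ w, ‖f w‖ ≤ B)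
    (hR : ∀ w, R < ‖w‖ → f w = 0) {r : ℝ} (hr : 0 < r) (z : ℂ) :
    ∫ η, cm f r η * (z - η)⁻¹ = 2 * Real.pi * ∫ w in Metric.ball z r, f w := by
  have hB0 : 0 ≤ B := (norm_nonneg _).trans (hB 0)
  let μ : Measure ℝ := volume.restrict (Set.Ioc 0 (2 * Real.pi))
  let e : ℝ → ℂ := circleMap 0 r
  have hec : Continuous e := continuous_circleMap 0 r
  have hen : ∀ θ, ‖e θ‖ = r := fun θ => by simp [e, abs_of_pos hr]
  let G : ℝ → ℂ → ℂ := fun θ η => f (η + e θ) * e θ * (z - η)⁻¹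
  have hGm : Measurable (Function.uncurry G) := by
    have h1 : Measurable fun p : ℝ × ℂ => f (p.2 + e p.1) * e p.1 :=
      (by fun_prop : Continuous fun p : ℝ × ℂ => f (p.2 + e p.1) * e p.1).measurable
    exact h1.mul (by fun_prop)
  -- a continuous majorant with bounded support
  have hmaj : Integrable (fun η : ℂ => (((B * r * max 0 (R + r + 1 - ‖η‖) : ℝ)) : ℂ) * (z - η)⁻¹) := by
    refine integrable_cauchy (B := B * r * (|R + r + 1|)) (R := R + r + 1) (by fun_prop) ?_ ?_ z
    · intro η
      rw [Complex.norm_real, Real.norm_eq_abs, abs_of_nonneg (by positivity)]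
      gcongr
      exact max_le (abs_nonneg _) (by linarith [norm_nonneg η, le_abs_self (R + r + 1)])
    · intro η hη
      rw [max_eq_left (by linarith)]
      simp
  have hGi : Integrable (Function.uncurry G) (μ.prod volume) := by
    refine (Integrable.comp_snd hmaj μ).mono hGm.aestronglyMeasurable
      (Filter.Eventually.of_forall ?_)
    rintro ⟨θ, η⟩
    simp only [Function.uncurry, G]
    rw [norm_mul, norm_mul _ (z - η)⁻¹]
    gcongr
    rw [norm_mul, hen, Complex.norm_real, Real.norm_eq_abs, abs_of_nonneg (by positivity)]
    by_cases h : R < ‖η + e θ‖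
    · rw [hR _ h]
      simp; positivity
    · have h1 : ‖η‖ ≤ ‖η + e θ‖ + ‖e θ‖ := by
        have := norm_sub_le (η + e θ) (e θ)
        simpa using this
      rw [hen] at h1
      have h2 : 1 ≤ max 0 (R + r + 1 - ‖η‖) := le_max_of_le_right (by linarith)
      have h3 := hB (η + e θ)
      calc ‖f (η + e θ)‖ * r ≤ B * r := by gcongr
        _ ≤ B * r * max 0 (R + r + 1 - ‖η‖) := le_mul_of_one_le_right (by positivity) h2
  have hmp : MeasurePreserving (fun p : ℝ × ℂ => (p.1, p.2 - e p.1)) (μ.prod volume)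
      (μ.prod volume) :=
    MeasurePreserving.skew_product (f := _root_.id) (MeasurePreserving.id μ)
      (g := fun θ w => w - e θ) (by fun_prop)
      (Filter.Eventually.of_forall fun θ => (measurePreserving_sub_right volume (e θ)).map_eq)
  have hGi2 : Integrable (Function.uncurry fun θ w => G θ (w - e θ)) (μ.prod volume) :=
    hmp.integrable_comp_of_integrable hGi
  have s1 : ∫ η, cm f r η * (z - η)⁻¹ = ∫ η, ∫ θ, G θ η ∂μ := by
    congr 1
    ext η
    rw [cm, intervalIntegral.integral_of_le (by positivity), ← integral_mul_const]
  have s2 : ∫ η, ∫ θ, G θ η ∂μ = ∫ θ, (∫ η, G θ η) ∂μ := (integral_integral_swap hGi).symm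
  have s3 : ∫ θ, (∫ η, G θ η) ∂μ = ∫ θ, (∫ w, G θ (w - e θ)) ∂μ := by
    congr 1
    ext θ
    exact (integral_sub_right_eq_self (G θ) (e θ)).symm
  have s4 : ∫ θ, (∫ w, G θ (w - e θ)) ∂μ = ∫ w, ∫ θ, G θ (w - e θ) ∂μ :=
    integral_integral_swap hGi2
  rw [s1, s2, s3, s4, ← integral_const_mul, ← integral_indicator measurableSet_ball]
  refine integral_congr_ae ?_
  have hsph : ∀ᵐ w : ℂ, w ∉ Metric.sphere z r :=
    measure_eq_zero_iff_ae_notMem.1 (Measure.addHaar_sphere volume z r)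
  filter_upwards [hsph] with w hw
  have hw' : ‖w - z‖ ≠ r := by simpa [dist_eq_norm] using hw
  have h1 := circle_inner hr (w - z) hw'
  rw [intervalIntegral.integral_of_le (by positivity)] at h1
  have h2 : ∫ θ, G θ (w - e θ) ∂μ = f w * ∫ θ in Set.Ioc 0 (2 * Real.pi),
      circleMap 0 r θ * (circleMap 0 r θ - (w - z))⁻¹ := by
    rw [← integral_const_mul]
    congr 1
    ext θ
    simp only [G, e, sub_add_cancel]
    rw [mul_assoc]
    congr 3
    ring
  rw [h2, h1]
  by_cases h : ‖w - z‖ < r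
  · rw [if_pos h, Set.indicator_of_mem (by simpa [dist_eq_norm] using h)]
    ring
  · rw [if_neg h, Set.indicator_of_notMem (by simpa [dist_eq_norm] using h)]
    ring

theorem cm_continuous {f : ℂ → ℂ} (hf : Continuous f) (r : ℝ) : Continuous (cm f r) := by
  unfold cm
  refine intervalIntegral.continuous_parametric_intervalIntegral_of_continuous' ?_ _ _
  have := continuous_circleMap 0 r
  change Continuous fun p : ℂ × ℝ => f (p.1 + circleMap 0 r p.2) * circleMap 0 r p.2
  fun_prop

theorem cm_eq {f : ℂ → ℂ} {r : ℝ} (η : ℂ) :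
    (∮ u in C(η, r), f u) = Complex.I * cm f r η := by
  rw [circleIntegral, cm, ← intervalIntegral.integral_const_mul]
  congr 1
  ext θ
  have : circleMap η r θ = η + circleMap 0 r θ := by simp [circleMap]
  simp only [deriv_circleMap, smul_eq_mul, this]
  ring

theorem cm_bound {f : ℂ → ℂ} (hf : Continuous f) {r ω : ℝ} (hr : 0 < r)
    (hω : ∀ x y, ‖x - y‖ ≤ r → ‖f x - f y‖ ≤ ω) (η : ℂ) : ‖cm f r η‖ ≤ 2 * Real.pi * r * ω := by
  have h1 : ∫ θ in (0:ℝ)..2 * Real.pi, circleMap 0 r θ = 0 := by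
    have h2 := cm_eq (f := fun _ => 1) (r := r) 0
    have h3 : (∮ u in C(0, r), (1:ℂ)) = 0 :=
      Complex.circleIntegral_eq_zero_of_differentiable_on_off_countable hr.le
        Set.countable_empty (by fun_prop) (fun _ _ => by fun_prop)
    rw [h3] at h2
    have := (mul_eq_zero.1 h2.symm).resolve_left Complex.I_ne_zero
    simpa [cm] using this
  have hc := continuous_circleMap 0 r
  have h2 : cm f r η = ∫ θ in (0:ℝ)..2 * Real.pi,
      (f (η + circleMap 0 r θ) - f η) * circleMap 0 r θ := by
    have : ∀ θ, (f (η + circleMap 0 r θ) - f η) * circleMap 0 r θ =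
      f (η + circleMap 0 r θ) * circleMap 0 r θ - f η * circleMap 0 r θ := fun θ => by ring
    simp_rw [this]
    rw [intervalIntegral.integral_sub, intervalIntegral.integral_const_mul, h1, mul_zero, sub_zero,
      cm]
    · exact Continuous.intervalIntegrable (by fun_prop) _ _
    · exact Continuous.intervalIntegrable (by fun_prop) _ _
  rw [h2]
  have h3 := intervalIntegral.norm_integral_le_of_norm_le_const (a := 0) (b := 2 * Real.pi)
    (C := ω * r) (f := fun θ => (f (η + circleMap 0 r θ) - f η) * circleMap 0 r θ) (by
      intro θ _
      have h0 : ‖circleMap 0 r θ‖ = r := by simp [abs_of_pos hr]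
      rw [norm_mul, h0]
      gcongr
      exact hω _ _ (by simp [abs_of_pos hr]))
  refine h3.trans (le_of_eq ?_)
  rw [sub_zero, abs_of_pos (by positivity)]
  ring

open MeasureTheory in
theorem avg_bound {f : ℂ → ℂ} (hf : Continuous f) {r ω : ℝ} (hr : 0 < r)
    (hω : ∀ x y, ‖x - y‖ ≤ r → ‖f x - f y‖ ≤ ω) (z : ℂ) :
    ‖(∫ w in Metric.ball z r, f w) - Real.pi * r ^ 2 * f z‖ ≤ Real.pi * r ^ 2 * ω := by
  have hv : volume.real (Metric.ball z r) = Real.pi * r ^ 2 := by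
    rw [Measure.real, Complex.volume_ball]
    simp [hr.le]
    ring
  have hfin : volume (Metric.ball z r) < ⊤ := measure_ball_lt_top
  have h1 : (∫ w in Metric.ball z r, f w) - Real.pi * r ^ 2 * f z =
      ∫ w in Metric.ball z r, (f w - f z) := by
    rw [integral_sub, setIntegral_const, hv, Complex.real_smul]
    · push_cast; rfl
    · exact (hf.continuousOn.integrableOn_compact (isCompact_closedBall z r)).mono_set
        Metric.ball_subset_closedBall
    · exact integrableOn_const hfin.ne
  rw [h1]
  have := norm_setIntegral_le_of_norm_le_const (f := fun w => f w - f z) (C := ω) hfin (by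
    intro w hw
    exact hω _ _ (by rw [← dist_eq_norm]; exact (Metric.mem_ball.1 hw).le))
  rw [hv] at this
  linarith

theorem exists_ext {K : Set ℂ} (hK : IsCompact K) {f : ℂ → ℂ} (hf : ContinuousOn f K) :
    ∃ F : ℂ → ℂ, Continuous F ∧ HasCompactSupport F ∧ ∀ z ∈ K, F z = f z := by
  obtain ⟨g, hg⟩ := ContinuousMap.exists_restrict_eq hK.isClosed (⟨K.domRestrict f, hf.domRestrict⟩ : C(K, ℂ))
  obtain ⟨R, hR⟩ := hK.isBounded.subset_closedBall 0
  let χ : ℂ → ℂ := fun z => ((max 0 (min 1 (R + 1 - ‖z‖)) : ℝ) : ℂ)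
  have hχ : HasCompactSupport χ := HasCompactSupport.intro (isCompact_closedBall (0:ℂ) (R + 1)) (by
    intro z hz
    have : R + 1 < ‖z‖ := by simpa using hz
    simp only [χ]
    rw [max_eq_left ((min_le_right _ _).trans (by linarith))]
    simp)
  refine ⟨fun z => χ z * g z, by fun_prop, hχ.mul_right, fun z hz => ?_⟩
  have h1 : g z = f z := by
    have := congrArg (fun F : C(K, ℂ) => F ⟨z, hz⟩) hg
    simpa using this
  have h2 : ‖z‖ ≤ R := by simpa using hR hz
  have h3 : χ z = 1 := by
    simp only [χ]
    rw [min_eq_left (by linarith), max_eq_right zero_le_one]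
    simp
  simp only [h1, h3, one_mul]

theorem mergelyan {K : Set ℂ} [CompactSpace K] (hcc : IsConnected Kᶜ) {f : ℂ → ℂ}
    (hf : ContinuousOn f K) (hfd : DifferentiableOn ℂ f (interior K)) : PK K f := by
  have hKc : IsCompact K := isCompact_iff_compactSpace.mpr inferInstance
  obtain ⟨F, hFc, hFs, hFf⟩ := exists_ext hKc hf
  have hFd : DifferentiableOn ℂ F (interior K) := hfd.congr fun z hz => hFf z (interior_subset hz)
  obtain ⟨B, hB⟩ := hFs.exists_bound_of_continuous hFc
  obtain ⟨R, hR⟩ := hFs.isBounded.subset_closedBall 0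
  have hR' : ∀ w, R < ‖w‖ → F w = 0 := fun w hw => by
    refine image_eq_zero_of_notMem_tsupport fun h => ?_
    have : ‖w‖ ≤ R := by simpa using hR h
    linarith
  have huc := Metric.uniformContinuous_iff.1 (hFs.uniformContinuous_of_continuous hFc)
  set C0 : ℝ := ∫ w, kap 1 w with hC0
  have hC0n : 0 ≤ C0 := MeasureTheory.integral_nonneg fun w => kap_nonneg _ _
  refine PK.limit fun ε hε => ?_
  set ω : ℝ := ε / (10 ^ 7 * C0 + 1) with hω
  have hωp : 0 < ω := by positivity
  obtain ⟨δ, hδ, hδ'⟩ := huc ω hωp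
  set r := δ / 2 with hr
  have hrp : 0 < r := by positivity
  have hω' : ∀ x y, ‖x - y‖ ≤ r → ‖F x - F y‖ ≤ ω := fun x y hxy => by
    rw [← dist_eq_norm] at hxy ⊢
    exact (hδ' (lt_of_le_of_lt hxy (by rw [hr]; linarith))).le
  obtain ⟨Q, hQ, hQ'⟩ := glue hcc hrp (cm_continuous hFc r) (R := R + r)
    (cm_bound hFc hrp hω') (by
      intro η hη
      have : ∀ θ, F (η + circleMap 0 r θ) = 0 := fun θ => hR' _ (by
        have h0 : ‖circleMap 0 r θ‖ = r := by simp [abs_of_pos hrp]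
        have := norm_sub_le (η + circleMap 0 r θ) (circleMap 0 r θ)
        rw [add_sub_cancel_right, h0] at this
        linarith)
      simp [cm, this]) (by
      intro η hη
      have h1 : (∮ u in C(η, r), F u) = 0 := by
        refine Complex.circleIntegral_eq_zero_of_differentiable_on_off_countable hrp.le
          Set.countable_empty hFc.continuousOn ?_
        intro u hu
        have hi : Metric.ball η r ⊆ interior K :=
          Metric.isOpen_ball.subset_interior_iff.2 (Metric.ball_subset_closedBall.trans hη)
        exact hFd.differentiableAt (isOpen_interior.mem_nhds (hi hu.1))
      rw [cm_eq] at h1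
      exact (mul_eq_zero.1 h1).resolve_left Complex.I_ne_zero)
  have hpi := Real.pi_pos
  refine ⟨_, (PK.const K (2 * Real.pi * (Real.pi * r ^ 2) : ℂ)⁻¹).mul hQ, fun z hz => ?_⟩
  have h1 := hQ' z hz
  rw [smoothing hFc hB hR' hrp z] at h1
  have h2 := avg_bound hFc hrp hω' z
  rw [← hFf z hz]
  set A : ℝ := 2 * Real.pi * (Real.pi * r ^ 2) with hA
  have hAp : 0 < A := by positivity
  have hAc : (2 * Real.pi * (Real.pi * r ^ 2) : ℂ) = (A : ℂ) := by rw [hA]; push_cast; ring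
  have h3 : ‖Q z - A * F z‖ ≤ A * ε := by
    have e1 : Q z - A * F z = (Q z - 2 * Real.pi * ∫ w in Metric.ball z r, F w) +
      2 * Real.pi * ((∫ w in Metric.ball z r, F w) - Real.pi * r ^ 2 * F z) := by
      rw [← hAc]; ring
    have e2 : ‖(2 * Real.pi : ℂ)‖ = 2 * Real.pi := by
      rw [norm_mul, Complex.norm_real]; simp [abs_of_pos hpi]
    rw [e1]
    refine (norm_add_le _ _).trans ?_
    rw [norm_mul, e2]
    calc _ ≤ 10 ^ 7 * (2 * Real.pi * r * ω) * (r * C0) + 2 * Real.pi * (Real.pi * r ^ 2 * ω) := by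
          gcongr
      _ = 2 * Real.pi * r ^ 2 * ω * (10 ^ 7 * C0 + Real.pi) := by ring
      _ ≤ 2 * Real.pi * r ^ 2 * ω * (Real.pi * (10 ^ 7 * C0 + 1)) := by
          gcongr
          nlinarith [Real.two_le_pi]
      _ = A * ε := by rw [hω, hA]; field_simp
  rw [hAc]
  have hA0 : (A : ℂ) ≠ 0 := by exact_mod_cast hAp.ne'
  have h4 : (A : ℂ)⁻¹ * Q z - F z = (A : ℂ)⁻¹ * (Q z - A * F z) := by field_simp
  rw [h4, norm_mul, norm_inv, Complex.norm_real, Real.norm_eq_abs, abs_of_pos hAp,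
    inv_mul_le_iff₀ hAp]
  exact h3

theorem path_bound {Ω : Set ℂ} (hΩo : IsOpen Ω) {M : ℝ} {z w : ℂ} (hj : JoinedLe Ω M z w)
    {D D1 : ℂ → ℂ} (hD : ∀ x ∈ Ω, HasDerivAt D (D1 x) x) {ε : ℝ} (hε : 0 ≤ ε)
    (hb : ∀ x ∈ Ω, ‖D1 x‖ ≤ ε) : ‖D w - D z‖ ≤ ε * max M 0 := by
  obtain ⟨γ, hγc, h0, h1, hγΩ, hvar⟩ := hj
  have hγc' : Continuous (fun t : unitInterval => γ t) :=
    continuousOn_iff_continuous_restrict.mp hγc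
  have hball : ∀ x : Ω, ∃ r > 0, Metric.ball (x : ℂ) r ⊆ Ω := fun x =>
    Metric.isOpen_iff.mp hΩo x x.2
  choose r hr hrs using hball
  obtain ⟨t, ht0, htm, ⟨n, hn⟩, hcov⟩ := exists_monotone_Icc_subset_open_cover_unitInterval
    (c := fun x : Ω => (fun t : unitInterval => γ t) ⁻¹' Metric.ball (x : ℂ) (r x))
    (fun x => Metric.isOpen_ball.preimage hγc')
    (fun s _ => Set.mem_iUnion.mpr ⟨⟨γ s, hγΩ s s.2⟩, by simpa using hr _⟩)
  have hstep : ∀ i, ‖D (γ (t (i + 1))) - D (γ (t i))‖ ≤ ε * ‖γ (t (i + 1)) - γ (t i)‖ := by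
    intro i
    obtain ⟨x, hx⟩ := hcov i
    have hle := htm (Nat.le_succ i)
    exact Convex.norm_image_sub_le_of_norm_hasDerivWithin_le
      (fun y hy => (hD y (hrs x hy)).hasDerivWithinAt) (fun y hy => hb y (hrs x hy))
      (convex_ball _ _) (hx (Set.left_mem_Icc.mpr hle)) (hx (Set.right_mem_Icc.mpr hle))
  have hsum : ∑ i ∈ Finset.range n, ‖γ (t (i + 1)) - γ (t i)‖ ≤ max M 0 := by
    have h := (eVariationOn.sum_le (f := γ) (n := n) (u := fun i => (t i : ℝ))
      (fun i j hij => htm hij) (fun i => (t i).2)).trans hvar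
    have e : ∑ i ∈ Finset.range n, edist (γ (t (i + 1))) (γ (t i))
        = ENNReal.ofReal (∑ i ∈ Finset.range n, ‖γ (t (i + 1)) - γ (t i)‖) := by
      rw [ENNReal.ofReal_sum_of_nonneg (fun _ _ => norm_nonneg _)]
      simp only [edist_dist, dist_eq_norm]
    rw [e] at h
    have h2 : ENNReal.ofReal M ≤ ENNReal.ofReal (max M 0) :=
      ENNReal.ofReal_le_ofReal (le_max_left _ _)
    exact (ENNReal.ofReal_le_ofReal_iff (le_max_right _ _)).mp (h.trans h2)
  have htel : D w - D z = ∑ i ∈ Finset.range n, (D (γ (t (i + 1))) - D (γ (t i))) := by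
    rw [Finset.sum_range_sub (fun i => D (γ (t i))), hn n le_rfl, ht0]
    simp [h0, h1]
  rw [htel]
  calc _ ≤ ∑ i ∈ Finset.range n, ‖D (γ (t (i + 1))) - D (γ (t i))‖ := norm_sum_le _ _
    _ ≤ ∑ i ∈ Finset.range n, ε * ‖γ (t (i + 1)) - γ (t i)‖ :=
      Finset.sum_le_sum fun i _ => hstep i
    _ = ε * ∑ i ∈ Finset.range n, ‖γ (t (i + 1)) - γ (t i)‖ := by rw [Finset.mul_sum]
    _ ≤ _ := mul_le_mul_of_nonneg_left hsum hε

theorem exists_antideriv (Q : Polynomial ℂ) : ∃ P : Polynomial ℂ, Polynomial.derivative P = Q := by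
  induction Q using Polynomial.induction_on' with
  | add p q hp hq =>
    obtain ⟨a, rfl⟩ := hp
    obtain ⟨b, rfl⟩ := hq
    exact ⟨a + b, by simp⟩
  | monomial n a =>
    refine ⟨Polynomial.monomial (n + 1) (a / (n + 1)), ?_⟩
    have : (n + 1 : ℂ) ≠ 0 := by exact_mod_cast Nat.succ_ne_zero n
    rw [Polynomial.derivative_monomial]
    simp [this]

theorem int_step {Ω : Set ℂ} (hΩo : IsOpen Ω) (hne : Ω.Nonempty) {M : ℝ}
    (hjoin : ∀ z ∈ Ω, ∀ w ∈ Ω, JoinedLe Ω M z w) {u v : ℂ → ℂ}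
    (huc : ContinuousOn u (closure Ω)) (huv : ∀ x ∈ Ω, HasDerivAt u (v x) x)
    {ε : ℝ} (hε : 0 ≤ ε) {Q : Polynomial ℂ} (hQ : ∀ z ∈ closure Ω, ‖Q.eval z - v z‖ ≤ ε) :
    ∃ P : Polynomial ℂ, Polynomial.derivative P = Q ∧
      ∀ z ∈ closure Ω, ‖P.eval z - u z‖ ≤ ε * max M 0 := by
  obtain ⟨P0, hP0⟩ := exists_antideriv Q
  obtain ⟨z0, hz0⟩ := hne
  refine ⟨P0 + Polynomial.C (u z0 - P0.eval z0), by simp [hP0], ?_⟩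
  have hc : ContinuousOn (fun z => ‖(P0 + Polynomial.C (u z0 - P0.eval z0)).eval z - u z‖)
      (closure Ω) := ((Polynomial.continuous _).continuousOn.sub huc).norm
  have hΩ : ∀ z ∈ Ω, ‖(P0 + Polynomial.C (u z0 - P0.eval z0)).eval z - u z‖ ≤ ε * max M 0 := by
    intro z hz
    have h := path_bound hΩo (hjoin z0 hz0 z hz) (D := fun x => P0.eval x - u x)
      (D1 := fun x => Q.eval x - v x)
      (fun x hx => by
        have h1 := P0.hasDerivAt x
        rw [hP0] at h1
        exact h1.sub (huv x hx)) hε (fun x hx => hQ x (subset_closure hx))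
    convert h using 2
    simp
    ring
  intro z hz
  exact le_on_closure hΩ hc continuousOn_const hz

theorem int_iter {Ω : Set ℂ} (hΩo : IsOpen Ω) (hne : Ω.Nonempty) {M : ℝ}
    (hjoin : ∀ z ∈ Ω, ∀ w ∈ Ω, JoinedLe Ω M z w) (n : ℕ) : ∀ (g : ℕ → ℂ → ℂ)
    (_ : ∀ k, ContinuousOn (g k) (closure Ω))
    (_ : ∀ k, ∀ x ∈ Ω, HasDerivAt (g k) (g (k + 1) x) x)
    (_ : ∀ ε > 0, ∃ Q : Polynomial ℂ, ∀ z ∈ closure Ω, ‖Q.eval z - g n z‖ ≤ ε),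
    ∀ ε > 0, ∃ P : Polynomial ℂ, ∀ k ≤ n, ∀ z ∈ closure Ω,
      ‖(Polynomial.derivative^[k] P).eval z - g k z‖ ≤ ε := by
  induction n with
  | zero =>
    intro g _ _ h ε hε
    obtain ⟨Q, hQ⟩ := h ε hε
    refine ⟨Q, fun k hk => ?_⟩
    obtain rfl : k = 0 := by omega
    simpa using hQ
  | succ n ih =>
    intro g hc hd h ε hε
    have hM : 0 < 1 + max M 0 := by positivity
    obtain ⟨Q, hQ⟩ := ih (fun k => g (k + 1)) (fun k => hc _) (fun k => hd _) h
      (ε / (1 + max M 0)) (by positivity)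
    have hle : ε / (1 + max M 0) ≤ ε := div_le_self hε.le (by linarith [le_max_right M 0])
    obtain ⟨P, hP, hPz⟩ := int_step hΩo hne hjoin (hc 0) (hd 0)
      (ε := ε / (1 + max M 0)) (by positivity) (hQ 0 (Nat.zero_le _))
    refine ⟨P, fun k hk z hz => ?_⟩
    cases k with
    | zero =>
      refine (hPz z hz).trans ?_
      rw [div_mul_eq_mul_div, div_le_iff₀ hM]
      nlinarith
    | succ k =>
      rw [Function.iterate_succ_apply, hP]
      exact (hQ k (by omega) z hz).trans hle

/-- **Polynomials are dense in `A^∞(Ω)`.** Let `Ω ⊂ ℂ` be a bounded domain with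
`(closure Ω)° = Ω`, with `ℂ \ closure Ω` connected, such that any two points of `Ω` can be
joined in `Ω` by a path of length at most `M`. If `f` is continuous on `closure Ω`,
holomorphic on `Ω`, and each derivative `f⁽ᵏ⁾` extends continuously to `closure Ω`
(the extension being `g k`), then for every `ε > 0` and `n` there is a polynomial `P` with
`|P⁽ᵏ⁾ - f⁽ᵏ⁾| < ε` on `closure Ω` for all `0 ≤ k ≤ n`. -/
theorem stmt5 (Ω : Set ℂ) (hΩo : IsOpen Ω) (hΩc : IsConnected Ω)
    (hΩb : Bornology.IsBounded Ω)
    (hreg : interior (closure Ω) = Ω)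
    (hcc : IsConnected (closure Ω)ᶜ)
    (M : ℝ) (hjoin : ∀ z ∈ Ω, ∀ w ∈ Ω, JoinedLe Ω M z w)
    (f : ℂ → ℂ) (hfc : ContinuousOn f (closure Ω)) (hfd : DifferentiableOn ℂ f Ω)
    (g : ℕ → ℂ → ℂ)
    (hg0 : ∀ z ∈ closure Ω, g 0 z = f z)
    (hgc : ∀ k, ContinuousOn (g k) (closure Ω))
    (hgd : ∀ k, ∀ z ∈ Ω, g k z = iteratedDeriv k f z) :
    ∀ ε > 0, ∀ n : ℕ, ∃ P : Polynomial ℂ, ∀ k ≤ n, ∀ z ∈ closure Ω,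
      ‖(Polynomial.derivative^[k] P).eval z - g k z‖ < ε := by
  have hdiff : ∀ k, DifferentiableOn ℂ (iteratedDeriv k f) Ω := by
    intro k
    induction k with
    | zero => simpa using hfd
    | succ k ih =>
      rw [iteratedDeriv_succ]
      exact ih.deriv hΩo
  have hd : ∀ k, ∀ x ∈ Ω, HasDerivAt (g k) (g (k + 1) x) x := by
    intro k x hx
    have h1 : HasDerivAt (iteratedDeriv k f) (iteratedDeriv (k + 1) f x) x := by
      rw [iteratedDeriv_succ]
      exact ((hdiff k).differentiableAt (hΩo.mem_nhds hx)).hasDerivAt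
    rw [hgd (k + 1) x hx]
    refine h1.congr_of_eventuallyEq ?_
    filter_upwards [hΩo.mem_nhds hx] with y hy using hgd k y hy
  have hcpt : IsCompact (closure Ω) := hΩb.isCompact_closure
  haveI : CompactSpace (closure Ω) := isCompact_iff_compactSpace.mp hcpt
  intro ε hε n
  obtain ⟨P, hP⟩ := int_iter hΩo hΩc.nonempty hjoin n g hgc hd (fun δ hδ => by
    have hm : PK (closure Ω) (g n) := mergelyan hcc (hgc n) (by
      rw [hreg]
      exact fun x hx => (hd n x hx).differentiableAt.differentiableWithinAt)
    obtain ⟨Q, hQ⟩ := hm.approx hδ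
    exact ⟨Q, fun z hz => (hQ z hz).le⟩) (ε / 2) (by positivity)
  exact ⟨P, fun k hk z hz => (hP k hk z hz).trans_lt (by linarith)⟩
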